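/- arXiv:2310.06348 — 2 statements merged into one kernel-verified Lean document; each statement's English description precedes it below -/
import Mathlib

section
/- Let h > 0 and β be real numbers, and let (a_n)_{n≥1} be a sequence of positive reals with a_n → ∞, a_n/√n → 0, and (log n)/a_n² → 0. For n large enough set m_n = ⌊h·n + β·a_n·√n⌋ (a nonnegative integer). Then lim_{n→∞} (1/a_n²) · log( e^{-h n} · (h n)^{m_n} / m_n! ) = −β²/(2h). -/
open Filter Real

lemma poisson_aux_log (t : ℝ) (ht : |t| ≤ 1 / 2) :
    |t - (1 + t) * Real.log (1 + t) + t ^ 2 / 2| ≤ 4 * |t| ^ 3 := by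
  have h1 := Real.abs_log_sub_add_sum_range_le (x := -t) (by rw [abs_neg]; linarith) 2
  simp only [Finset.sum_range_succ, Finset.sum_range_zero, abs_neg, sub_neg_eq_add] at h1
  norm_num at h1
  have h2 : |t| ^ 3 / (1 - |t|) ≤ 2 * |t| ^ 3 := by
    rw [div_le_iff₀ (by linarith)]
    have : 0 ≤ |t| ^ 3 := by positivity
    nlinarith
  set R := -t + t ^ 2 / 2 + Real.log (1 + t) with hR
  have h3 : t - (1 + t) * Real.log (1 + t) + t ^ 2 / 2 = t ^ 3 / 2 - (1 + t) * R := by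
    rw [hR]; ring
  rw [h3]
  have h4 : |(1 + t) * R| ≤ (3 / 2) * (2 * |t| ^ 3) := by
    rw [abs_mul]
    apply mul_le_mul _ (h1.trans h2) (abs_nonneg _) (by norm_num)
    calc |1 + t| ≤ |1| + |t| := abs_add_le _ _
      _ ≤ 3 / 2 := by rw [abs_one]; linarith
  have h5 : |t ^ 3 / 2| = |t| ^ 3 / 2 := by rw [abs_div, abs_pow]; norm_num
  have h6 := abs_sub (t ^ 3 / 2) ((1 + t) * R)
  have : 0 ≤ |t| ^ 3 := by positivity
  linarith

lemma poisson_aux_eq (μ : ℝ) (hμ : 0 < μ) (m : ℕ) (hm : 0 < m) (t : ℝ) (ht : (m : ℝ) = μ * (1 + t)) :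
    Real.log (Real.exp (-μ) * μ ^ m / (Nat.factorial m)) =
      -(μ * t ^ 2 / 2) + μ * (t - (1 + t) * Real.log (1 + t) + t ^ 2 / 2)
      - 1 / 2 * (Real.log 2 + Real.log μ + Real.log (1 + t)) - Real.log (Stirling.stirlingSeq m) := by
  have hm' : (0 : ℝ) < m := by exact_mod_cast hm
  have h1t : 0 < 1 + t := by
    rw [ht] at hm'
    exact (pos_iff_pos_of_mul_pos hm').1 hμ
  have hS := Stirling.log_stirlingSeq_formula m
  rw [Real.log_div (by positivity) (by positivity), Real.log_mul (by positivity) (by positivity),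
    Real.log_exp, Real.log_pow]
  rw [Real.log_div (by positivity) (by positivity), Real.log_exp, Real.log_mul (by positivity) (by positivity)] at hS
  have hl : Real.log m = Real.log μ + Real.log (1 + t) := by
    rw [ht, Real.log_mul (by positivity) (by positivity)]
  rw [hS, hl, ht]
  ring

/-- Local moderate-deviation estimate for Poisson probabilities: with
`m_n = ⌊h·n + β·a_n·√n⌋`,
`lim (1/a_n²)·log(e^{-h n} (h n)^{m_n} / m_n!) = −β²/(2h)`. -/
theorem poisson_local_mdp (h β : ℝ) (hh : 0 < h) (a : ℕ → ℝ)
    (ha_pos : ∀ n, 0 < a n)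
    (ha_top : Tendsto a atTop atTop)
    (ha_sqrt : Tendsto (fun n : ℕ => a n / Real.sqrt n) atTop (nhds 0))
    (ha_log : Tendsto (fun n : ℕ => Real.log n / (a n) ^ 2) atTop (nhds 0)) :
    Tendsto (fun n : ℕ =>
        (1 / (a n) ^ 2) * Real.log (Real.exp (-(h * n))
          * (h * n) ^ (⌊h * n + β * a n * Real.sqrt n⌋₊)
          / (Nat.factorial ⌊h * n + β * a n * Real.sqrt n⌋₊)))
      atTop (nhds (-(β ^ 2 / (2 * h)))) := by
  have hn_top : Tendsto (fun n : ℕ => (n : ℝ)) atTop atTop := tendsto_natCast_atTop_atTop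
  have hsq_top : Tendsto (fun n : ℕ => Real.sqrt n) atTop atTop :=
    Real.tendsto_sqrt_atTop.comp hn_top
  have ha2 : Tendsto (fun n => ((a n) ^ 2)⁻¹) atTop (nhds 0) :=
    ((tendsto_pow_atTop (by norm_num)).comp ha_top).inv_tendsto_atTop
  set m : ℕ → ℕ := fun n => ⌊h * n + β * a n * Real.sqrt n⌋₊ with hm
  set s : ℕ → ℝ := fun n => ((m n : ℝ) - h * n) / (h * Real.sqrt n * a n) with hs
  set t : ℕ → ℝ := fun n => s n * (a n / Real.sqrt n) with ht
  have hnpos : ∀ᶠ n : ℕ in atTop, (0 : ℝ) < n := hn_top.eventually_gt_atTop 0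
  have harg : ∀ᶠ n : ℕ in atTop, 0 ≤ h * n + β * a n * Real.sqrt n := by
    have h1 : Tendsto (fun n : ℕ => h + β * (a n / Real.sqrt n)) atTop (nhds (h + β * 0)) :=
      (ha_sqrt.const_mul β).const_add h
    rw [mul_zero, add_zero] at h1
    filter_upwards [h1.eventually_const_lt hh, hnpos] with n hn hp
    have h2 : h * n + β * a n * Real.sqrt n = n * (h + β * (a n / Real.sqrt n)) := by
      have hq : 0 < Real.sqrt n := Real.sqrt_pos.2 hp
      have hq2 : Real.sqrt n * Real.sqrt n = n := Real.mul_self_sqrt hp.le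
      field_simp
      linear_combination (β * a n) * hq2
    rw [h2]; positivity
  have hs_lim : Tendsto s atTop (nhds (β / h)) := by
    have h1 : Tendsto (fun n : ℕ => (h * Real.sqrt n * a n)⁻¹) atTop (nhds 0) :=
      ((hsq_top.const_mul_atTop hh).atTop_mul_atTop₀ ha_top).inv_tendsto_atTop
    rw [tendsto_iff_norm_sub_tendsto_zero]
    refine squeeze_zero' (Eventually.of_forall fun _ => norm_nonneg _) ?_ h1
    filter_upwards [harg, hnpos] with n hn hp
    have hq : 0 < Real.sqrt n := Real.sqrt_pos.2 hp
    have hap := ha_pos n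
    have hD : 0 < h * Real.sqrt n * a n := by positivity
    have e : s n - β / h =
        ((m n : ℝ) - (h * n + β * a n * Real.sqrt n)) * (h * Real.sqrt n * a n)⁻¹ := by
      simp only [hs]; field_simp; ring
    rw [e, Real.norm_eq_abs, abs_mul, abs_of_pos (inv_pos.2 hD)]
    have f1 := Nat.floor_le hn
    have f2 := Nat.lt_floor_add_one (h * n + β * a n * Real.sqrt n)
    have : |(m n : ℝ) - (h * n + β * a n * Real.sqrt n)| ≤ 1 := by
      rw [abs_le]; constructor <;> simp only [hm] <;> linarith
    calc _ ≤ 1 * (h * Real.sqrt n * a n)⁻¹ := by gcongr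
      _ = _ := one_mul _
  have ht_lim : Tendsto t atTop (nhds 0) := by
    simpa using hs_lim.mul ha_sqrt
  have hmt : ∀ᶠ n : ℕ in atTop, (m n : ℝ) = h * n * (1 + t n) := by
    filter_upwards [hnpos] with n hp
    have hq : 0 < Real.sqrt n := Real.sqrt_pos.2 hp
    have hap := ha_pos n
    have hq2 : Real.sqrt n ^ 2 = n := Real.sq_sqrt hp.le
    have : t n = ((m n : ℝ) - h * n) / (h * n) := by
      simp only [ht, hs]
      rw [← hq2]; simp only [Real.sqrt_sq hq.le]
      field_simp
    rw [this]; field_simp; ring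
  have h1t : Tendsto (fun n => 1 + t n) atTop (nhds 1) := by simpa using ht_lim.const_add 1
  have hm_topR : Tendsto (fun n => (m n : ℝ)) atTop atTop := by
    refine Tendsto.congr' (hmt.mono fun n hn => hn.symm) ?_
    exact (hn_top.const_mul_atTop hh).atTop_mul_pos one_pos h1t
  have hm_top : Tendsto m atTop atTop := tendsto_natCast_atTop_iff.1 hm_topR
  have hS : Tendsto (fun n => Real.log (Stirling.stirlingSeq (m n))) atTop
      (nhds (Real.log (Real.sqrt Real.pi))) :=
    ((Stirling.tendsto_stirlingSeq_sqrt_pi.comp hm_top).log (by positivity))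
  have hL : Tendsto (fun n => Real.log (1 + t n)) atTop (nhds 0) := by
    simpa using h1t.log one_ne_zero
  have hF : Tendsto (fun n : ℕ => ((a n) ^ 2)⁻¹ * (h * n *
      (t n - (1 + t n) * Real.log (1 + t n) + t n ^ 2 / 2))) atTop (nhds 0) := by
    have h1 : Tendsto (fun n => 4 * h * (s n ^ 2 * |t n|)) atTop (nhds 0) := by
      have := ((hs_lim.pow 2).mul ht_lim.abs).const_mul (4 * h)
      simpa using this
    refine squeeze_zero_norm' ?_ h1
    have h2 := ht_lim.abs
    rw [abs_zero] at h2
    filter_upwards [hnpos, h2.eventually_le_const (show (0 : ℝ) < 1 / 2 by norm_num)] with n hp hn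
    have hap := ha_pos n
    have hq : 0 < Real.sqrt n := Real.sqrt_pos.2 hp
    have hq2 : Real.sqrt n ^ 2 = n := Real.sq_sqrt hp.le
    rw [Real.norm_eq_abs, abs_mul, abs_mul, abs_of_pos (show 0 < ((a n) ^ 2)⁻¹ by positivity),
      abs_of_pos (show 0 < h * (n : ℝ) by positivity)]
    calc _ ≤ ((a n) ^ 2)⁻¹ * (h * n * (4 * |t n| ^ 3)) := by
          gcongr; exact poisson_aux_log _ hn
      _ = 4 * h * ((n / a n ^ 2 * t n ^ 2) * |t n|) := by
          rw [← sq_abs (t n)]; field_simp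
      _ = _ := by
          have : n / a n ^ 2 * t n ^ 2 = s n ^ 2 := by
            simp only [ht]; rw [mul_pow, div_pow (a n), hq2]; field_simp
          rw [this]
  have hmain : Tendsto (fun n : ℕ => -(h * s n ^ 2 / 2) + ((a n) ^ 2)⁻¹ * (h * n *
      (t n - (1 + t n) * Real.log (1 + t n) + t n ^ 2 / 2))
      - 1 / 2 * (((a n) ^ 2)⁻¹ * (Real.log 2 + Real.log h + Real.log (1 + t n))
        + Real.log n / (a n) ^ 2)
      - ((a n) ^ 2)⁻¹ * Real.log (Stirling.stirlingSeq (m n))) atTop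
      (nhds (-(h * (β / h) ^ 2 / 2) + 0
        - 1 / 2 * (0 * (Real.log 2 + Real.log h + 0) + 0) - 0 * Real.log (Real.sqrt Real.pi))) :=
    ((((((hs_lim.pow 2).const_mul h).div_const 2).neg.add hF).sub
      (((ha2.mul (hL.const_add _)).add ha_log).const_mul _)).sub (ha2.mul hS))
  have hval : -(h * (β / h) ^ 2 / 2) + 0
        - 1 / 2 * (0 * (Real.log 2 + Real.log h + 0) + 0) - 0 * Real.log (Real.sqrt Real.pi)
        = -(β ^ 2 / (2 * h)) := by
    field_simp; ring
  rw [hval] at hmain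
  refine hmain.congr' ?_
  filter_upwards [hnpos, hmt, hm_top.eventually_gt_atTop 0] with n hp hn hmp
  have hap := ha_pos n
  have hq2 : Real.sqrt n ^ 2 = n := Real.sq_sqrt hp.le
  have hst : h * s n ^ 2 / 2 = ((a n) ^ 2)⁻¹ * (h * n * t n ^ 2 / 2) := by
    simp only [ht]; rw [mul_pow, div_pow (a n), hq2]; field_simp
  rw [poisson_aux_eq (h * n) (by positivity) (m n) hmp (t n) hn, hst,
    Real.log_mul hh.ne' hp.ne']
  ring
end

section
/- Let h > 0 and K > 0 be real numbers, and let (a_n)_{n≥1} be a sequence of positive reals with a_n → ∞ and a_n/√n → 0. Then limsup_{n→∞} (1/a_n²) · log( Σ_{m ∈ ℕ, |m − h n| > K·a_n·√n} e^{-h n} (h n)^m / m! ) ≤ −K²/(2h). -/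
open Filter Real

noncomputable def pTail (l t : ℝ) (m : ℕ) : ℝ :=
  if t < |(m : ℝ) - l| then Real.exp (-l) * l ^ m / (Nat.factorial m) else 0

lemma pTail_nonneg {l : ℝ} (hl : 0 < l) (t : ℝ) (m : ℕ) : 0 ≤ pTail l t m := by
  unfold pTail
  split_ifs <;> positivity

lemma hasSum_tilt (l θ : ℝ) :
    HasSum (fun m : ℕ => Real.exp (-l) * l ^ m / (Nat.factorial m) * Real.exp (θ * (m - l)))
      (Real.exp (l * (Real.exp θ - 1 - θ))) := by
  have h1 := NormedSpace.expSeries_div_hasSum_exp (l * Real.exp θ)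
  rw [← Real.exp_eq_exp_ℝ] at h1
  have h2 := h1.mul_left (Real.exp (-l) * Real.exp (-(θ * l)))
  have e1 : (fun m : ℕ => Real.exp (-l) * l ^ m / (Nat.factorial m) * Real.exp (θ * (m - l))) =
      fun m : ℕ => Real.exp (-l) * Real.exp (-(θ * l)) *
        ((l * Real.exp θ) ^ m / (Nat.factorial m)) := by
    funext m
    have : Real.exp (θ * (m - l)) = Real.exp (-(θ * l)) * Real.exp θ ^ m := by
      rw [← Real.exp_nat_mul, ← Real.exp_add]; congr 1; ring
    rw [this, mul_pow]; ring
  have e2 : Real.exp (l * (Real.exp θ - 1 - θ)) =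
      Real.exp (-l) * Real.exp (-(θ * l)) * Real.exp (l * Real.exp θ) := by
    rw [← Real.exp_add, ← Real.exp_add]; congr 1; ring
  rw [e1, e2]
  exact h2

lemma pTail_summable {l : ℝ} (hl : 0 < l) (t : ℝ) : Summable (pTail l t) := by
  refine Summable.of_nonneg_of_le (pTail_nonneg hl t) (fun m => ?_) (hasSum_tilt l 0).summable
  unfold pTail
  simp only [zero_mul, Real.exp_zero, mul_one]
  split_ifs
  · exact le_rfl
  · positivity

lemma exp_third {x θ : ℝ} (hx : |x| = θ) (h1 : θ ≤ 1) :
    Real.exp x - 1 - x ≤ θ ^ 2 / 2 + θ ^ 3 := by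
  have h := Real.exp_bound (x := x) (by rw [hx]; exact h1) (n := 3) (by norm_num)
  have h0 : 0 ≤ θ := hx ▸ abs_nonneg x
  rw [hx] at h
  have h' := (abs_le.1 h).2
  norm_num [Finset.sum_range_succ, Nat.factorial] at h'
  have : x ^ 2 = θ ^ 2 := by rw [← hx, sq_abs]
  have h3 : 0 ≤ θ ^ 3 := by positivity
  nlinarith

lemma pTail_upper {l t θ : ℝ} (hl : 0 < l) (h0 : 0 ≤ θ) (h1 : θ ≤ 1) :
    ∑' m, pTail l t m ≤ 2 * Real.exp (-(θ * t) + l * (θ ^ 2 / 2 + θ ^ 3)) := by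
  have hs := ((hasSum_tilt l θ).add (hasSum_tilt l (-θ))).mul_left (Real.exp (-(θ * t)))
  have hle : ∀ m : ℕ, pTail l t m ≤ Real.exp (-(θ * t)) *
      (Real.exp (-l) * l ^ m / (Nat.factorial m) * Real.exp (θ * (m - l)) +
        Real.exp (-l) * l ^ m / (Nat.factorial m) * Real.exp (-θ * (m - l))) := by
    intro m
    unfold pTail
    split_ifs with hc
    · have hp : 0 ≤ Real.exp (-l) * l ^ m / (Nat.factorial m) := by positivity
      have key : 1 ≤ Real.exp (-(θ * t)) * (Real.exp (θ * (m - l)) + Real.exp (-θ * (m - l))) := by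
        rw [mul_add, ← Real.exp_add, ← Real.exp_add]
        rcases lt_abs.1 hc with hc | hc
        · have : 1 ≤ Real.exp (-(θ * t) + θ * (m - l)) := Real.one_le_exp (by nlinarith)
          linarith [Real.exp_pos (-(θ * t) + -θ * (m - l))]
        · have : 1 ≤ Real.exp (-(θ * t) + -θ * (m - l)) := Real.one_le_exp (by nlinarith)
          linarith [Real.exp_pos (-(θ * t) + θ * (m - l))]
      nlinarith [mul_le_mul_of_nonneg_left key hp]
    · positivity
  refine ((pTail_summable hl t).tsum_le_tsum hle hs.summable).trans ?_
  rw [hs.tsum_eq, Real.exp_add]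
  have e1 := exp_third (abs_of_nonneg h0) h1
  have e2 := exp_third (x := -θ) (by rw [abs_neg, abs_of_nonneg h0]) h1
  have g1 := Real.exp_le_exp.2 (mul_le_mul_of_nonneg_left e1 hl.le)
  have g2 := Real.exp_le_exp.2 (mul_le_mul_of_nonneg_left e2 hl.le)
  have := mul_le_mul_of_nonneg_left (add_le_add g1 g2) (Real.exp_pos (-(θ * t))).le
  linarith

lemma fact_upper {m : ℕ} (hm : 1 ≤ m) :
    (Nat.factorial m : ℝ) ≤ Real.exp 1 * √m * (m / Real.exp 1) ^ m := by
  obtain ⟨k, rfl⟩ := Nat.exists_eq_add_of_le' hm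
  have h := Stirling.stirlingSeq'_antitone (Nat.zero_le k)
  simp only [Function.comp, Nat.succ_eq_add_one, zero_add, Stirling.stirlingSeq_one] at h
  unfold Stirling.stirlingSeq at h
  have h2 : 0 < √(2:ℝ) := by positivity
  have hpos : (0:ℝ) < √(2 * ((k + 1 : ℕ) : ℝ)) * (((k + 1 : ℕ) : ℝ) / Real.exp 1) ^ (k + 1) := by
    positivity
  rw [div_le_iff₀ hpos, Real.sqrt_mul (by norm_num)] at h
  refine h.trans (le_of_eq ?_)
  field_simp

lemma term_lower {l : ℝ} (hl : 0 < l) {m : ℕ} (hm : 1 ≤ m) :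
    Real.exp (-((m - l) ^ 2 / l)) / (Real.exp 1 * √m) ≤
      Real.exp (-l) * l ^ m / (Nat.factorial m) := by
  have hm0 : (0:ℝ) < m := by exact_mod_cast hm
  have hf := fact_upper hm
  have h1 : Real.exp (-l) * l ^ m / (Real.exp 1 * √m * (m / Real.exp 1) ^ m) ≤
      Real.exp (-l) * l ^ m / (Nat.factorial m) := by gcongr
  refine le_trans ?_ h1
  rw [div_le_div_iff₀ (by positivity) (by positivity)]
  have hlog : Real.log (m / l) ≤ m / l - 1 := Real.log_le_sub_one_of_pos (by positivity)
  have hml : Real.exp (-((m - l) ^ 2 / l)) * (m / Real.exp 1) ^ m ≤ Real.exp (-l) * l ^ m := by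
    have e1 : (m / Real.exp 1) ^ m = l ^ m * Real.exp (m * (Real.log (m / l) - 1)) := by
      rw [Real.exp_nat_mul, Real.exp_sub, Real.exp_log (by positivity), ← mul_pow]
      congr 1; field_simp
    rw [e1, mul_left_comm, ← Real.exp_add, mul_comm]
    gcongr
    have : m * (Real.log (m / l) - 1) ≤ m * (m / l - 1 - 1) := by gcongr
    have e : (m:ℝ) * (m / l - 1 - 1) = (m - l) ^ 2 / l - l := by field_simp; ring
    linarith
  have := mul_le_mul_of_nonneg_right hml (show 0 ≤ Real.exp 1 * √m by positivity)
  linarith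

lemma pTail_lower {l t s : ℝ} (hl : 0 < l) (ht : 0 ≤ t) (hs : 0 < s) :
    s * (Real.exp (-((t + 1 + s) ^ 2 / l)) / (Real.exp 1 * √(l + t + 1 + s))) ≤
      ∑' m, pTail l t m := by
  set M := ⌊l + t⌋₊ + 1
  set N := ⌈s⌉₊
  set c := Real.exp (-((t + 1 + s) ^ 2 / l)) / (Real.exp 1 * √(l + t + 1 + s)) with hc
  have hc0 : 0 ≤ c := by positivity
  have h1 : s * c ≤ ∑ m ∈ Finset.Ico M (M + N), c := by
    rw [Finset.sum_const, Nat.card_Ico, Nat.add_sub_cancel_left, nsmul_eq_mul]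
    exact mul_le_mul_of_nonneg_right (Nat.le_ceil s) hc0
  refine h1.trans (le_trans (Finset.sum_le_sum fun m hm => ?_)
    ((pTail_summable hl t).sum_le_tsum _ fun m _ => pTail_nonneg hl t m))
  rw [Finset.mem_Ico] at hm
  have a1 : l + t < m := by
    have := Nat.lt_floor_add_one (l + t)
    have h : (M : ℝ) ≤ m := by exact_mod_cast hm.1
    simp only [M] at h; push_cast at h; linarith
  have a2 : (m:ℝ) ≤ l + t + 1 + s := by
    have g1 : (⌊l + t⌋₊ : ℝ) ≤ l + t := Nat.floor_le (by linarith)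
    have g2 : (N : ℝ) < s + 1 := Nat.ceil_lt_add_one hs.le
    have h : (m : ℝ) + 1 ≤ M + N := by exact_mod_cast hm.2
    simp only [M] at h; push_cast at h; linarith
  have hm1 : 1 ≤ m := by simp only [M] at hm; omega
  have hm0 : (0:ℝ) < m := by exact_mod_cast hm1
  unfold pTail
  rw [if_pos (by rw [abs_of_nonneg] <;> linarith)]
  refine le_trans ?_ (term_lower hl hm1)
  rw [hc]
  have : ((m:ℝ) - l) ^ 2 ≤ (t + 1 + s) ^ 2 := by
    apply pow_le_pow_left₀ <;> linarith
  gcongr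

/-- Moderate-deviation tail bound for Poisson random variables:
`limsup (1/a_n²)·log P(|Y_n − h n| > K a_n √n) ≤ −K²/(2h)` for `Y_n` Poisson of parameter `h n`. -/
theorem poisson_tail_mdp (h K : ℝ) (hh : 0 < h) (hK : 0 < K) (a : ℕ → ℝ)
    (ha_pos : ∀ n, 0 < a n)
    (ha_top : Tendsto a atTop atTop)
    (ha_sqrt : Tendsto (fun n : ℕ => a n / Real.sqrt n) atTop (nhds 0)) :
    Filter.limsup (fun n : ℕ =>
        (1 / (a n) ^ 2) * Real.log (∑' m : ℕ,
          if K * a n * Real.sqrt n < |(m : ℝ) - h * n|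
          then Real.exp (-(h * n)) * (h * n) ^ m / (Nat.factorial m) else 0))
      atTop ≤ -(K ^ 2 / (2 * h)) := by
  have hun : ∀ n : ℕ, (∑' m : ℕ,
          if K * a n * Real.sqrt n < |(m : ℝ) - h * n|
          then Real.exp (-(h * n)) * (h * n) ^ m / (Nat.factorial m) else 0)
        = ∑' m, pTail (h * n) (K * a n * √n) m := fun n => rfl
  simp only [hun]
  set u : ℕ → ℝ := fun n => 1 / a n ^ 2 * Real.log (∑' m, pTail (h * n) (K * a n * √n) m) with hu
  have hn1 : ∀ᶠ n : ℕ in atTop, 1 ≤ n := eventually_ge_atTop 1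
  have ha1 : ∀ᶠ n : ℕ in atTop, 1 ≤ a n := ha_top.eventually_ge_atTop 1
  have hratio : ∀ e : ℝ, 0 < e → ∀ᶠ n : ℕ in atTop, a n / √n < e := fun e he =>
    ha_sqrt.eventually (gt_mem_nhds he)
  have hpos : ∀ n : ℕ, 1 ≤ n → 0 < ∑' m, pTail (h * n) (K * a n * √n) m := by
    intro n hn
    have hn0 : (0:ℝ) < n := by exact_mod_cast hn
    have := ha_pos n
    refine lt_of_lt_of_le ?_ (pTail_lower (s := 1) (by positivity) (by positivity) one_pos)
    positivity
  set v : ℕ → ℝ := fun n => Real.log 2 * (1 / a n ^ 2) - K ^ 2 / (2 * h)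
    + K ^ 3 / h ^ 2 * (a n / √n) with hv
  have hvt : Tendsto v atTop (nhds (-(K ^ 2 / (2 * h)))) := by
    have h1 : Tendsto (fun n => 1 / a n ^ 2) atTop (nhds 0) := by
      simp only [one_div]
      exact ((tendsto_pow_atTop two_ne_zero).comp ha_top).inv_tendsto_atTop
    have := ((h1.const_mul (Real.log 2)).sub_const (K ^ 2 / (2 * h))).add
      (ha_sqrt.const_mul (K ^ 3 / h ^ 2))
    simpa [hv] using this
  have huv : u ≤ᶠ[atTop] v := by
    filter_upwards [hn1, hratio (h / K) (by positivity)] with n hn hr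
    have hn0 : (0:ℝ) < n := by exact_mod_cast hn
    have han := ha_pos n
    obtain ⟨q, hq, hqn⟩ : ∃ q : ℝ, 0 < q ∧ √n = q := ⟨_, Real.sqrt_pos.2 hn0, rfl⟩
    have hnq : (n:ℝ) = q ^ 2 := by rw [← hqn, Real.sq_sqrt hn0.le]
    have hup := pTail_upper (l := h * n) (t := K * a n * √n) (θ := K / h * (a n / √n))
      (by positivity) (by positivity) (by
        calc K / h * (a n / √n) ≤ K / h * (h / K) := by gcongr
          _ = 1 := by field_simp)
    have hlog := Real.log_le_log (hpos n hn) hup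
    rw [Real.log_mul (by norm_num) (Real.exp_pos _).ne', Real.log_exp] at hlog
    have := mul_le_mul_of_nonneg_left hlog (show 0 ≤ 1 / a n ^ 2 by positivity)
    refine this.trans (le_of_eq ?_)
    simp only [hv]
    rw [hqn, hnq]
    field_simp
    ring
  have hlow : ∀ᶠ n in atTop, -((K + 2) ^ 2 / h) - |Real.log (Real.exp 1 * √(h + K + 2))| ≤ u n := by
    filter_upwards [hn1, ha1, hratio 1 one_pos] with n hn ha hr
    have hn0 : (0:ℝ) < n := by exact_mod_cast hn
    have hn1' : (1:ℝ) ≤ n := by exact_mod_cast hn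
    have hq1 : 1 ≤ √(n:ℝ) := Real.one_le_sqrt.2 hn1'
    have hq0 : 0 < √(n:ℝ) := by linarith
    have han := ha_pos n
    have hsq : √(n:ℝ) ^ 2 = n := Real.sq_sqrt hn0.le
    have haq : a n ≤ √n := by rw [div_lt_one hq0] at hr; exact hr.le
    have hlo := pTail_lower (l := h * n) (t := K * a n * √n) (s := √n)
      (by positivity) (by positivity) hq0
    have b1 : (K * a n * √n + 1 + √n) ^ 2 / (h * n) ≤ (K + 2) ^ 2 / h * a n ^ 2 := by
      have : K * a n * √n + 1 + √n ≤ (K + 2) * a n * √n := by nlinarith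
      calc (K * a n * √n + 1 + √n) ^ 2 / (h * n) ≤ ((K + 2) * a n * √n) ^ 2 / (h * n) := by gcongr
        _ = _ := by rw [mul_pow, hsq]; field_simp
    have b2 : √(h * n + K * a n * √n + 1 + √n) ≤ √(h + K + 2) * √n := by
      rw [← Real.sqrt_mul (by positivity)]
      apply Real.sqrt_le_sqrt
      have : K * a n * √n ≤ K * n := by
        rw [← hsq, mul_assoc, sq, Real.sqrt_mul_self hq0.le]; gcongr
      nlinarith
    have b3 : Real.exp (-((K + 2) ^ 2 / h * a n ^ 2)) / (Real.exp 1 * √(h + K + 2)) ≤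
        ∑' m, pTail (h * n) (K * a n * √n) m := by
      refine le_trans ?_ hlo
      calc _ = √n * (Real.exp (-((K + 2) ^ 2 / h * a n ^ 2)) /
            (Real.exp 1 * (√(h + K + 2) * √n))) := by field_simp
        _ ≤ _ := by gcongr
    have hlog := Real.log_le_log (by positivity) b3
    rw [Real.log_div (Real.exp_pos _).ne' (by positivity), Real.log_exp] at hlog
    have := mul_le_mul_of_nonneg_left hlog (show 0 ≤ 1 / a n ^ 2 by positivity)
    refine le_trans ?_ this
    set L := Real.log (Real.exp 1 * √(h + K + 2))
    have c1 : 1 / a n ^ 2 * L ≤ |L| := by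
      have d1 : 1 / a n ^ 2 ≤ 1 := by
        rw [div_le_one (by positivity)]; nlinarith
      calc 1 / a n ^ 2 * L ≤ 1 / a n ^ 2 * |L| := by gcongr; exact le_abs_self L
        _ ≤ 1 * |L| := by gcongr
        _ = |L| := one_mul _
    have c2 : 1 / a n ^ 2 * (-((K + 2) ^ 2 / h * a n ^ 2)) = -((K + 2) ^ 2 / h) := by field_simp
    rw [mul_sub, c2]; linarith
  have hcob : IsCoboundedUnder (· ≤ ·) atTop u :=
    IsBoundedUnder.isCoboundedUnder_le ⟨_, eventually_map.2 hlow⟩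
  exact (limsup_le_limsup huv hcob hvt.isBoundedUnder_le).trans hvt.limsup_eq.le
end
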